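/- In the setting of the representation map ℛ and the matrices 𝒰, 𝒰̂ (defined from a basis p₀,…,p_{N−1} of polynomials of degree ≤ N−1, the integrated basis p̄, quadratures with positive weights exact for degrees 2N−2 and 2N respectively, stepsizes h_j > 0, and block structure U_j = blockdiag(I_k ⊗ h_j^{3/2}Γ̄V̄, I_{m−k} ⊗ h_j^{1/2}ΓV), Û_j = blockdiag(I_k ⊗ [h_j^{3/2}Γ̄V̄; h_j^{1/2}Γ̄V̊], I_{m−k} ⊗ h_j^{1/2}ΓV)), define ‖x‖²_{L²} = Σ_j Σ_{κ=1}^m ∫_{t_{j−1}}^{t_j}|x_κ|² and ‖x‖²_{H¹_{D,π}} = Σ_j{Σ_{κ≤k}∫(|x_κ|²+|x_κ′|²) + Σ_{κ>k}∫|x_κ|²}. Then: sup_{c≠0} ‖ℛc‖_{L²}/|c| = σ_max(𝒰), sup_{c≠0} |c|/‖ℛc‖_{L²} = σ_min(𝒰)^{−1}, sup_{c≠0} ‖ℛc‖_{H¹_{D,π}}/|c| = σ_max(𝒰̂), and sup_{c≠0} |c|/‖ℛc‖_{H¹_{D,π}} = σ_min(𝒰̂)^{−1}, where σ_max and σ_min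 denote the largest and smallest singular value. -/

import Mathlib

open MeasureTheory Matrix Polynomial
open scoped BigOperators

/-- `p̄₀ = 1`, `p̄ᵢ(τ) = ∫₀^τ p_{i-1}(σ) dσ`. -/
noncomputable def pbarEval (p : ℕ → Polynomial ℝ) : ℕ → ℝ → ℝ
  | 0, _ => 1
  | i + 1, τ => ∫ s in (0:ℝ)..τ, (p i).eval s

/-- A quadrature rule on `[0,1]` with nodes `0 ≤ σ₁ < … < σ_M ≤ 1` and positive weights,
exact for all polynomials of degree `≤ d`. -/
def IsQuad {M : ℕ} (σ γ : Fin M → ℝ) (d : ℕ) : Prop :=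
  (∀ i, σ i ∈ Set.Icc (0:ℝ) 1) ∧ StrictMono σ ∧ (∀ i, 0 < γ i) ∧
    ∀ q : Polynomial ℝ, q.natDegree ≤ d →
      ∑ i, γ i * q.eval (σ i) = ∫ s in (0:ℝ)..1, q.eval s

/-- Row/column index type for the block matrix `𝒰` (also the index type of coefficient
vectors `c`): block `j`, then either a "differential" index `(κ, l)` with `l : Fin (N+1)`
or an "algebraic" index with `l : Fin N`. -/
abbrev UIdx (N m k n : ℕ) := Fin n × (Fin k × Fin (N + 1) ⊕ Fin (m - k) × Fin N)

/-- Row index type for `𝒰̂`: in each differential block the rows of `h^{3/2}Γ̄V̄`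
are stacked above the rows of `h^{1/2}Γ̄V̊`. -/
abbrev UhIdx (N m k n : ℕ) := Fin n × (Fin k × (Fin (N + 1) ⊕ Fin (N + 1)) ⊕ Fin (m - k) × Fin N)

/-- `𝒰 = blockdiag(U₁,…,U_n)`, `U_j = blockdiag(I_k ⊗ h_j^{3/2}Γ̄V̄, I_{m-k} ⊗ h_j^{1/2}ΓV)`. -/
noncomputable def Umat (N m k n : ℕ) (p : ℕ → Polynomial ℝ) (h : Fin n → ℝ)
    (σ γ : Fin N → ℝ) (σb γb : Fin (N + 1) → ℝ) :
    Matrix (UIdx N m k n) (UIdx N m k n) ℝ :=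
  Matrix.of fun x y =>
    match x, y with
    | (j, Sum.inl (κ, i)), (j', Sum.inl (κ', α)) =>
        if j = j' ∧ κ = κ' then
          h j ^ ((3:ℝ)/2) * Real.sqrt (γb i) * pbarEval p (α : ℕ) (σb i) else 0
    | (j, Sum.inr (κ, i)), (j', Sum.inr (κ', α)) =>
        if j = j' ∧ κ = κ' then
          h j ^ ((1:ℝ)/2) * Real.sqrt (γ i) * (p (α : ℕ)).eval (σ i) else 0
    | _, _ => 0

/-- `𝒰̂ = blockdiag(Û₁,…,Û_n)`, where `Û_j` has the blocks `h_j^{3/2}Γ̄V̄` stacked above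
`h_j^{1/2}Γ̄V̊` in the differential part (`V̊_{iα} = p̄'_{α-1}(σ̄ᵢ)`), and
`I_{m-k} ⊗ h_j^{1/2}ΓV` in the algebraic part. -/
noncomputable def Uhmat (N m k n : ℕ) (p : ℕ → Polynomial ℝ) (h : Fin n → ℝ)
    (σ γ : Fin N → ℝ) (σb γb : Fin (N + 1) → ℝ) :
    Matrix (UhIdx N m k n) (UIdx N m k n) ℝ :=
  Matrix.of fun x y =>
    match x, y with
    | (j, Sum.inl (κ, Sum.inl i)), (j', Sum.inl (κ', α)) =>
        if j = j' ∧ κ = κ' then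
          h j ^ ((3:ℝ)/2) * Real.sqrt (γb i) * pbarEval p (α : ℕ) (σb i) else 0
    | (j, Sum.inl (κ, Sum.inr i)), (j', Sum.inl (κ', α)) =>
        if j = j' ∧ κ = κ' then
          h j ^ ((1:ℝ)/2) * Real.sqrt (γb i) * deriv (pbarEval p (α : ℕ)) (σb i) else 0
    | (j, Sum.inr (κ, i)), (j', Sum.inr (κ', α)) =>
        if j = j' ∧ κ = κ' then
          h j ^ ((1:ℝ)/2) * Real.sqrt (γ i) * (p (α : ℕ)).eval (σ i) else 0
    | _, _ => 0

/-- The differential components (`κ = 1,…,k`) of `x = ℛc` on the subinterval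
`[t_{j-1}, t_j)`:  `x_κ(s) = Σ_{l=0}^{N} c_{jκl} · h_j · p̄_l((s - t_{j-1})/h_j)`. -/
noncomputable def xdiff (N m k n : ℕ) (p : ℕ → Polynomial ℝ) (t : ℕ → ℝ)
    (c : UIdx N m k n → ℝ) (j : Fin n) (κ : Fin k) (s : ℝ) : ℝ :=
  ∑ l : Fin (N + 1), c (j, Sum.inl (κ, l)) *
    ((t ((j : ℕ) + 1) - t (j : ℕ)) *
      pbarEval p (l : ℕ) ((s - t (j : ℕ)) / (t ((j : ℕ) + 1) - t (j : ℕ))))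

/-- The algebraic components (`κ = k+1,…,m`) of `x = ℛc` on the subinterval
`[t_{j-1}, t_j)`:  `x_κ(s) = Σ_{l=0}^{N-1} c_{jκl} · p_l((s - t_{j-1})/h_j)`. -/
noncomputable def xalg (N m k n : ℕ) (p : ℕ → Polynomial ℝ) (t : ℕ → ℝ)
    (c : UIdx N m k n → ℝ) (j : Fin n) (κ : Fin (m - k)) (s : ℝ) : ℝ :=
  ∑ l : Fin N, c (j, Sum.inr (κ, l)) *
    (p (l : ℕ)).eval ((s - t (j : ℕ)) / (t ((j : ℕ) + 1) - t (j : ℕ)))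

/-- `‖ℛc‖²_{L²}`. -/
noncomputable def normL2sq (N m k n : ℕ) (p : ℕ → Polynomial ℝ) (t : ℕ → ℝ)
    (c : UIdx N m k n → ℝ) : ℝ :=
  ∑ j : Fin n,
    ((∑ κ : Fin k, ∫ s in t (j : ℕ)..t ((j : ℕ) + 1), (xdiff N m k n p t c j κ s) ^ 2) +
     ∑ κ : Fin (m - k), ∫ s in t (j : ℕ)..t ((j : ℕ) + 1), (xalg N m k n p t c j κ s) ^ 2)

/-- `‖ℛc‖²_{H¹_{D,π}}` (with piecewise derivatives of the differential components). -/
noncomputable def normH1sq (N m k n : ℕ) (p : ℕ → Polynomial ℝ) (t : ℕ → ℝ)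
    (c : UIdx N m k n → ℝ) : ℝ :=
  ∑ j : Fin n,
    ((∑ κ : Fin k, ∫ s in t (j : ℕ)..t ((j : ℕ) + 1),
        ((xdiff N m k n p t c j κ s) ^ 2 + (deriv (xdiff N m k n p t c j κ) s) ^ 2)) +
     ∑ κ : Fin (m - k), ∫ s in t (j : ℕ)..t ((j : ℕ) + 1), (xalg N m k n p t c j κ s) ^ 2)

/-- `s` is a singular value of `A`: `s ≥ 0` and `s²` is an eigenvalue of `AᵀA`. -/
def IsSingVal {I J : Type} [Fintype I] [Fintype J] (A : Matrix I J ℝ) (s : ℝ) : Prop :=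
  0 ≤ s ∧ ∃ v : J → ℝ, v ≠ 0 ∧ (Aᵀ * A).mulVec v = s ^ 2 • v

/-- Euclidean norm of a coefficient vector. -/
noncomputable def enormU {N m k n : ℕ} (c : UIdx N m k n → ℝ) : ℝ :=
  Real.sqrt (∑ i, c i ^ 2)

/-! ### Linear algebra -/

lemma aux_gram {I J : Type} [Fintype I] [Fintype J] (A : Matrix I J ℝ) (c : J → ℝ) :
    c ⬝ᵥ ((Aᵀ * A).mulVec c) = ∑ i, (A.mulVec c i) ^ 2 := by
  rw [← mulVec_mulVec, dotProduct_mulVec, vecMul_transpose]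
  simp [dotProduct, sq]

lemma aux_dot {J : Type} [Fintype J] (c : J → ℝ) : c ⬝ᵥ c = ∑ i, c i ^ 2 := by
  simp [dotProduct, sq]

lemma aux_pos {J : Type} [Fintype J] {c : J → ℝ} (hc : c ≠ 0) : 0 < ∑ i, c i ^ 2 := by
  obtain ⟨i, hi⟩ := Function.ne_iff.mp hc
  exact Finset.sum_pos' (fun i _ => sq_nonneg _) ⟨i, Finset.mem_univ _, by
    have : c i ≠ 0 := hi
    positivity⟩

lemma aux_eig {I J : Type} [Fintype I] [Fintype J] (A : Matrix I J ℝ) {v : J → ℝ} {μ : ℝ}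
    (h : (Aᵀ * A).mulVec v = μ • v) : ∑ i, (A.mulVec v i) ^ 2 = μ * ∑ i, v i ^ 2 := by
  rw [← aux_gram, h, dotProduct_smul, aux_dot, smul_eq_mul]

lemma aux_sing {I J : Type} [Fintype I] [Fintype J] (A : Matrix I J ℝ) {v : J → ℝ} {μ : ℝ}
    (hv : v ≠ 0) (h : (Aᵀ * A).mulVec v = μ • v) : 0 ≤ μ ∧ IsSingVal A (Real.sqrt μ) := by
  have h1 := aux_eig A h
  have h2 := aux_pos hv
  have h3 : 0 ≤ ∑ i, (A.mulVec v i) ^ 2 := Finset.sum_nonneg fun i _ => sq_nonneg _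
  have h4 : 0 ≤ μ := by
    by_contra hneg
    push Not at hneg
    nlinarith
  refine ⟨h4, Real.sqrt_nonneg _, v, hv, ?_⟩
  rw [Real.sq_sqrt h4, h]

lemma aux_herm {I J : Type} [Fintype I] [Fintype J] [DecidableEq J] (A : Matrix I J ℝ) (r : ℝ) :
    (r • (1 : Matrix J J ℝ) - Aᵀ * A).IsHermitian := by
  rw [Matrix.IsHermitian, conjTranspose_eq_transpose_of_trivial]
  simp

/-- upper bound for the Rayleigh quotient -/
lemma aux_max {I J : Type} [Fintype I] [Fintype J] [DecidableEq J] (A : Matrix I J ℝ) {s : ℝ}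
    (hs : IsGreatest {s | IsSingVal A s} s) (c : J → ℝ) :
    ∑ i, (A.mulVec c i) ^ 2 ≤ s ^ 2 * ∑ i, c i ^ 2 := by
  have hH := aux_herm A (s ^ 2)
  have hP : (s ^ 2 • (1 : Matrix J J ℝ) - Aᵀ * A).PosSemidef := by
    rw [hH.posSemidef_iff_eigenvalues_nonneg]
    intro j
    have h1 := hH.mulVec_eigenvectorBasis j
    set v : J → ℝ := (hH.eigenvectorBasis j).ofLp with hv
    have hv0 : v ≠ 0 := by
      intro h0
      apply hH.eigenvectorBasis.toBasis.ne_zero j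
      ext i
      simpa using congrFun h0 i
    have h2 : (Aᵀ * A).mulVec v = (s ^ 2 - hH.eigenvalues j) • v := by
      rw [sub_mulVec, smul_mulVec, one_mulVec] at h1
      rw [sub_smul, ← h1]; abel
    obtain ⟨h3, h4⟩ := aux_sing A hv0 h2
    have h5 := hs.2 h4
    have h6 := (Real.sqrt_le_left hs.1.1).mp h5
    have : 0 ≤ hH.eigenvalues j := by linarith
    exact this
  have := hP.dotProduct_mulVec_nonneg c
  rw [sub_mulVec, smul_mulVec, one_mulVec, dotProduct_sub, dotProduct_smul] at this
  simp only [star_trivial, aux_gram, aux_dot, smul_eq_mul] at this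
  linarith

lemma aux_min {I J : Type} [Fintype I] [Fintype J] [DecidableEq J] (A : Matrix I J ℝ) {s : ℝ}
    (hs : IsLeast {s | IsSingVal A s} s) (c : J → ℝ) :
    s ^ 2 * ∑ i, c i ^ 2 ≤ ∑ i, (A.mulVec c i) ^ 2 := by
  have hH : (Aᵀ * A - s ^ 2 • (1 : Matrix J J ℝ)).IsHermitian := by
    have := (aux_herm A (s ^ 2)).neg
    rwa [neg_sub] at this
  have hP : (Aᵀ * A - s ^ 2 • (1 : Matrix J J ℝ)).PosSemidef := by
    rw [hH.posSemidef_iff_eigenvalues_nonneg]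
    intro j
    have h1 := hH.mulVec_eigenvectorBasis j
    set v : J → ℝ := (hH.eigenvectorBasis j).ofLp with hv
    have hv0 : v ≠ 0 := by
      intro h0
      apply hH.eigenvectorBasis.toBasis.ne_zero j
      ext i
      simpa using congrFun h0 i
    have h2 : (Aᵀ * A).mulVec v = (s ^ 2 + hH.eigenvalues j) • v := by
      rw [sub_mulVec, smul_mulVec, one_mulVec] at h1
      rw [add_smul, ← h1]; abel
    obtain ⟨h3, h4⟩ := aux_sing A hv0 h2
    have h5 := hs.2 h4
    have h6 := (Real.le_sqrt hs.1.1 h3).mp h5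
    have : 0 ≤ hH.eigenvalues j := by linarith
    exact this
  have := hP.dotProduct_mulVec_nonneg c
  rw [sub_mulVec, smul_mulVec, one_mulVec, dotProduct_sub, dotProduct_smul] at this
  simp only [star_trivial, aux_gram, aux_dot, smul_eq_mul] at this
  linarith

lemma aux_supmax {I J : Type} [Fintype I] [Fintype J] [DecidableEq J] (A : Matrix I J ℝ) {s : ℝ}
    (hs : IsGreatest {s | IsSingVal A s} s) :
    sSup {r : ℝ | ∃ c : J → ℝ, c ≠ 0 ∧
      r = Real.sqrt (∑ i, (A.mulVec c i) ^ 2) / Real.sqrt (∑ i, c i ^ 2)} = s := by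
  apply IsGreatest.csSup_eq
  constructor
  · obtain ⟨h0, v, hv, h⟩ := hs.1
    refine ⟨v, hv, ?_⟩
    have := aux_pos hv
    rw [aux_eig A h, Real.sqrt_mul (sq_nonneg s), Real.sqrt_sq h0,
      mul_div_cancel_right₀ _ (Real.sqrt_pos.mpr this).ne']
  · rintro r ⟨c, hc, rfl⟩
    have := aux_pos hc
    rw [div_le_iff₀ (Real.sqrt_pos.mpr this)]
    calc _ ≤ Real.sqrt (s ^ 2 * ∑ i, c i ^ 2) := Real.sqrt_le_sqrt (aux_max A hs c)
      _ = _ := by rw [Real.sqrt_mul (sq_nonneg s), Real.sqrt_sq hs.1.1]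

lemma aux_supmin {I J : Type} [Fintype I] [Fintype J] [DecidableEq J] (A : Matrix I J ℝ) {s : ℝ}
    (hinj : ∀ c, A.mulVec c = 0 → c = 0)
    (hs : IsLeast {s | IsSingVal A s} s) :
    sSup {r : ℝ | ∃ c : J → ℝ, c ≠ 0 ∧
      r = Real.sqrt (∑ i, c i ^ 2) / Real.sqrt (∑ i, (A.mulVec c i) ^ 2)} = s⁻¹ := by
  apply IsGreatest.csSup_eq
  constructor
  · obtain ⟨h0, v, hv, h⟩ := hs.1
    refine ⟨v, hv, ?_⟩
    have := aux_pos hv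
    rw [aux_eig A h, Real.sqrt_mul (sq_nonneg s), Real.sqrt_sq h0, div_mul_cancel_right₀
       (Real.sqrt_pos.mpr this).ne']
  · rintro r ⟨c, hc, rfl⟩
    have h1 := aux_pos hc
    have hspos : 0 < s := by
      obtain ⟨h0, v, hv, h⟩ := hs.1
      rcases h0.eq_or_lt with h0 | h0
      · exfalso
        have h2 := aux_eig A h
        have h3 : A.mulVec v ≠ 0 := fun h' => hv (hinj v h')
        have h4 := aux_pos h3
        rw [h2, ← h0] at h4
        simp at h4
      · exact h0
    have h3 : A.mulVec c ≠ 0 := fun h' => hc (hinj c h')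
    have h4 := aux_pos h3
    rw [div_le_iff₀ (Real.sqrt_pos.mpr h4), inv_mul_eq_div, le_div_iff₀ hspos]
    calc _ = Real.sqrt (s ^ 2 * ∑ i, c i ^ 2) := by
          rw [Real.sqrt_mul (sq_nonneg s), Real.sqrt_sq hs.1.1, mul_comm]
      _ ≤ _ := Real.sqrt_le_sqrt (aux_min A hs c)

/-! ### Antiderivatives -/

lemma aux_anti (q : Polynomial ℝ) : ∃ P : Polynomial ℝ, derivative P = q ∧ P.eval 0 = 0 ∧
    P.natDegree ≤ q.natDegree + 1 := by
  refine ⟨∑ i ∈ Finset.range (q.natDegree + 1), monomial (i + 1) (q.coeff i / (i + 1)), ?_, ?_, ?_⟩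
  · conv_rhs => rw [q.as_sum_range]
    rw [derivative_sum]
    refine Finset.sum_congr rfl fun i _ => ?_
    rw [derivative_monomial]
    have : (i : ℝ) + 1 ≠ 0 := by positivity
    simp [this]
  · simp [eval_finsetSum]
  · refine natDegree_sum_le_of_forall_le _ _ fun i hi => ?_
    refine (natDegree_monomial_le _).trans ?_
    have := Finset.mem_range.mp hi
    omega

noncomputable def auxP (p : ℕ → Polynomial ℝ) : ℕ → Polynomial ℝ
  | 0 => 1
  | i + 1 => (aux_anti (p i)).choose

lemma auxP_eval (p : ℕ → Polynomial ℝ) (l : ℕ) : pbarEval p l = fun τ => (auxP p l).eval τ := by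
  funext τ
  cases l with
  | zero => simp [pbarEval, auxP]
  | succ i =>
    obtain ⟨h1, h2, -⟩ := (aux_anti (p i)).choose_spec
    simp only [pbarEval, auxP]
    have : ∀ x ∈ Set.uIcc 0 τ, HasDerivAt (fun x => ((aux_anti (p i)).choose).eval x)
        ((p i).eval x) x := by
      intro x _
      have := ((aux_anti (p i)).choose).hasDerivAt x
      rwa [h1] at this
    rw [intervalIntegral.integral_eq_sub_of_hasDerivAt this
      ((p i).continuous.intervalIntegrable _ _), h2, sub_zero]

lemma auxP_deg (N : ℕ) (hN : 1 ≤ N) (p : ℕ → Polynomial ℝ)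
    (hdeg : ∀ i < N, (p i).natDegree ≤ N - 1) (l : Fin (N + 1)) :
    (auxP p l).natDegree ≤ N := by
  obtain ⟨l, hl⟩ := l
  cases l with
  | zero => simp [auxP]
  | succ i =>
    obtain ⟨-, -, h3⟩ := (aux_anti (p i)).choose_spec
    have := hdeg i (by omega)
    simp only [auxP]
    omega

/-- the local polynomial of a differential component -/
noncomputable def auxQ (N : ℕ) (p : ℕ → Polynomial ℝ) (d : Fin (N + 1) → ℝ) : Polynomial ℝ :=
  ∑ l, C (d l) * auxP p l

noncomputable def auxR (N : ℕ) (p : ℕ → Polynomial ℝ) (d : Fin N → ℝ) : Polynomial ℝ :=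
  ∑ l : Fin N, C (d l) * p l

lemma auxQ_deg (N : ℕ) (hN : 1 ≤ N) (p : ℕ → Polynomial ℝ)
    (hdeg : ∀ i < N, (p i).natDegree ≤ N - 1) (d) : (auxQ N p d).natDegree ≤ N :=
  natDegree_sum_le_of_forall_le _ _ fun l _ =>
    (natDegree_C_mul_le _ _).trans (auxP_deg N hN p hdeg l)

lemma auxR_deg (N : ℕ) (p : ℕ → Polynomial ℝ)
    (hdeg : ∀ i < N, (p i).natDegree ≤ N - 1) (d) : (auxR N p d).natDegree ≤ N - 1 :=
  natDegree_sum_le_of_forall_le _ _ fun l _ =>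
    (natDegree_C_mul_le _ _).trans (hdeg l l.2)

lemma auxR_inj (N : ℕ) (p : ℕ → Polynomial ℝ) (hli : LinearIndependent ℝ fun i : Fin N => p i)
    (d) (h : auxR N p d = 0) : d = 0 := by
  funext i
  refine Fintype.linearIndependent_iff.mp hli d ?_ i
  simpa [auxR, smul_eq_C_mul] using h

lemma auxQ_inj (N : ℕ) (p : ℕ → Polynomial ℝ) (hli : LinearIndependent ℝ fun i : Fin N => p i)
    (d) (h : auxQ N p d = 0) : d = 0 := by
  have h1 : auxR N p (fun l => d l.succ) = derivative (auxQ N p d) := by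
    rw [auxQ, derivative_sum, Fin.sum_univ_succ, auxR]
    simp only [derivative_C_mul, Fin.val_succ, Fin.val_zero, auxP, derivative_one, mul_zero,
      zero_add]
    refine Finset.sum_congr rfl fun i _ => ?_
    rw [(aux_anti (p i)).choose_spec.1]
  rw [h, derivative_zero] at h1
  have h2 := auxR_inj N p hli _ h1
  have h3 : ∀ l : Fin N, d l.succ = 0 := fun l => congrFun h2 l
  rw [auxQ, Fin.sum_univ_succ] at h
  simp [h3, auxP] at h
  funext l
  refine Fin.cases h h3 l

lemma aux_nodes {M d : ℕ} {σ γ : Fin M → ℝ} (hq : IsQuad σ γ d) {q : Polynomial ℝ}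
    (hdeg : q.natDegree < M) (h : ∀ i, q.eval (σ i) = 0) : q = 0 := by
  refine eq_zero_of_natDegree_lt_card_of_eval_eq_zero q hq.2.1.injective h ?_
  simpa using hdeg

lemma aux_quad {M d : ℕ} {σ γ : Fin M → ℝ} (hq : IsQuad σ γ d) {q : Polynomial ℝ}
    (hdeg : q.natDegree ≤ d) (a b : ℝ) (hab : a < b) :
    ∫ s in a..b, q.eval ((s - a) / (b - a)) = (b - a) * ∑ i, γ i * q.eval (σ i) := by
  have hne : b - a ≠ 0 := by linarith
  have := intervalIntegral.integral_comp_div_sub (a := a) (b := b) (fun s => q.eval s) hne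
    (a / (b - a))
  simp only [← sub_div, sub_self, zero_div, div_self hne, smul_eq_mul] at this
  rw [this, hq.2.2.2 q hdeg]

lemma aux_xdiff (N m k n : ℕ) (p : ℕ → Polynomial ℝ) (t : ℕ → ℝ)
    (c : UIdx N m k n → ℝ) (j : Fin n) (κ : Fin k) :
    xdiff N m k n p t c j κ = fun s => (t ((j : ℕ) + 1) - t (j : ℕ)) *
      (auxQ N p fun l => c (j, Sum.inl (κ, l))).eval
        ((s - t (j : ℕ)) / (t ((j : ℕ) + 1) - t (j : ℕ))) := by
  funext s
  simp only [xdiff, auxQ, eval_finsetSum, eval_mul, eval_C, auxP_eval, Finset.mul_sum]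
  refine Finset.sum_congr rfl fun i _ => by ring

lemma aux_xalg (N m k n : ℕ) (p : ℕ → Polynomial ℝ) (t : ℕ → ℝ)
    (c : UIdx N m k n → ℝ) (j : Fin n) (κ : Fin (m - k)) :
    xalg N m k n p t c j κ = fun s => 
      (auxR N p fun l => c (j, Sum.inr (κ, l))).eval
        ((s - t (j : ℕ)) / (t ((j : ℕ) + 1) - t (j : ℕ))) := by
  funext s
  simp only [xalg, auxR, eval_finsetSum, eval_mul, eval_C]

lemma aux_dxdiff (N m k n : ℕ) (p : ℕ → Polynomial ℝ) (t : ℕ → ℝ)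
    (c : UIdx N m k n → ℝ) (j : Fin n) (κ : Fin k) (hj : t (j : ℕ) < t ((j : ℕ) + 1)) (s : ℝ) :
    deriv (xdiff N m k n p t c j κ) s = 
      (derivative (auxQ N p fun l => c (j, Sum.inl (κ, l)))).eval
        ((s - t (j : ℕ)) / (t ((j : ℕ) + 1) - t (j : ℕ))) := by
  have hne : t ((j : ℕ) + 1) - t (j : ℕ) ≠ 0 := by linarith
  rw [aux_xdiff]
  set h := t ((j : ℕ) + 1) - t (j : ℕ)
  set Q := auxQ N p fun l => c (j, Sum.inl (κ, l))
  have h1 : HasDerivAt (fun s => (s - t (j : ℕ)) / h) (1 / h) s :=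
    ((hasDerivAt_id s).sub_const _).div_const h
  have h2 := ((Q.hasDerivAt ((s - t (j : ℕ)) / h)).comp s h1).const_mul h
  have h3 := h2.deriv
  simp only [Function.comp_def] at h3
  rw [h3]
  field_simp

/-! ### The matrices -/

section
variable (N m k n : ℕ) (p : ℕ → Polynomial ℝ) (h : Fin n → ℝ)
    (σ γ : Fin N → ℝ) (σb γb : Fin (N + 1) → ℝ) (c : UIdx N m k n → ℝ)

lemma U_inl (j : Fin n) (κ : Fin k) (i : Fin (N + 1)) :
    (Umat N m k n p h σ γ σb γb).mulVec c (j, Sum.inl (κ, i)) =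
      h j ^ ((3:ℝ)/2) * Real.sqrt (γb i) *
        (auxQ N p fun l => c (j, Sum.inl (κ, l))).eval (σb i) := by
  simp only [mulVec, dotProduct, Umat, Matrix.of_apply, Fintype.sum_prod_type,
    Fintype.sum_sum_type, ite_and, ite_mul, zero_mul, Finset.sum_const_zero, add_zero]
  simp [auxQ, eval_finsetSum, auxP_eval, Finset.mul_sum]
  refine Finset.sum_congr rfl fun i _ => by ring

lemma U_inr (j : Fin n) (κ : Fin (m - k)) (i : Fin N) :
    (Umat N m k n p h σ γ σb γb).mulVec c (j, Sum.inr (κ, i)) =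
      h j ^ ((1:ℝ)/2) * Real.sqrt (γ i) *
        (auxR N p fun l => c (j, Sum.inr (κ, l))).eval (σ i) := by
  simp only [mulVec, dotProduct, Umat, Matrix.of_apply, Fintype.sum_prod_type,
    Fintype.sum_sum_type, ite_and, ite_mul, zero_mul, Finset.sum_const_zero, zero_add]
  simp [auxR, eval_finsetSum, Finset.mul_sum]
  refine Finset.sum_congr rfl fun i _ => by ring

lemma Uh_inl (j : Fin n) (κ : Fin k) (i : Fin (N + 1)) :
    (Uhmat N m k n p h σ γ σb γb).mulVec c (j, Sum.inl (κ, Sum.inl i)) =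
      h j ^ ((3:ℝ)/2) * Real.sqrt (γb i) *
        (auxQ N p fun l => c (j, Sum.inl (κ, l))).eval (σb i) := by
  simp only [mulVec, dotProduct, Uhmat, Matrix.of_apply, Fintype.sum_prod_type,
    Fintype.sum_sum_type, ite_and, ite_mul, zero_mul, Finset.sum_const_zero, add_zero]
  simp [auxQ, eval_finsetSum, auxP_eval, Finset.mul_sum]
  refine Finset.sum_congr rfl fun i _ => by ring

lemma Uh_inm (j : Fin n) (κ : Fin k) (i : Fin (N + 1)) :
    (Uhmat N m k n p h σ γ σb γb).mulVec c (j, Sum.inl (κ, Sum.inr i)) =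
      h j ^ ((1:ℝ)/2) * Real.sqrt (γb i) *
        (derivative (auxQ N p fun l => c (j, Sum.inl (κ, l)))).eval (σb i) := by
  simp only [mulVec, dotProduct, Uhmat, Matrix.of_apply, Fintype.sum_prod_type,
    Fintype.sum_sum_type, ite_and, ite_mul, zero_mul, Finset.sum_const_zero, add_zero]
  simp [auxQ, eval_finsetSum, auxP_eval, Finset.mul_sum, derivative_sum]
  refine Finset.sum_congr rfl fun i _ => by ring

lemma Uh_inr (j : Fin n) (κ : Fin (m - k)) (i : Fin N) :
    (Uhmat N m k n p h σ γ σb γb).mulVec c (j, Sum.inr (κ, i)) =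
      h j ^ ((1:ℝ)/2) * Real.sqrt (γ i) *
        (auxR N p fun l => c (j, Sum.inr (κ, l))).eval (σ i) := by
  simp only [mulVec, dotProduct, Uhmat, Matrix.of_apply, Fintype.sum_prod_type,
    Fintype.sum_sum_type, ite_and, ite_mul, zero_mul, Finset.sum_const_zero, zero_add]
  simp [auxR, eval_finsetSum, Finset.mul_sum]
  refine Finset.sum_congr rfl fun i _ => by ring

end

lemma aux_sq3 {h g x : ℝ} (hh : 0 < h) (hg : 0 < g) :
    (h ^ ((3:ℝ)/2) * Real.sqrt g * x) ^ 2 = h * (g * (h * x) ^ 2) := by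
  rw [mul_pow, mul_pow, Real.sq_sqrt hg.le, ← Real.rpow_natCast, ← Real.rpow_mul hh.le]
  norm_num
  ring

lemma aux_sq1 {h g x : ℝ} (hh : 0 < h) (hg : 0 < g) :
    (h ^ ((1:ℝ)/2) * Real.sqrt g * x) ^ 2 = h * (g * x ^ 2) := by
  rw [mul_pow, mul_pow, Real.sq_sqrt hg.le, ← Real.rpow_natCast, ← Real.rpow_mul hh.le]
  norm_num
  ring

section
variable (N m k n : ℕ) (hN : 1 ≤ N)
    (t : ℕ → ℝ) (hmono : ∀ j < n, t j < t (j + 1))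
    (p : ℕ → Polynomial ℝ)
    (hdeg : ∀ i < N, (p i).natDegree ≤ N - 1)
    (hli : LinearIndependent ℝ fun i : Fin N => p i)
    (σ γ : Fin N → ℝ) (σb γb : Fin (N + 1) → ℝ)
    (hq : IsQuad σ γ (2 * N - 2)) (hqb : IsQuad σb γb (2 * N))
    (c : UIdx N m k n → ℝ)

lemma aux_alg (hmono : ∀ j < n, t j < t (j + 1))
    (hdeg : ∀ i < N, (p i).natDegree ≤ N - 1) (hq : IsQuad σ γ (2 * N - 2))
    (j : Fin n) (κ : Fin (m - k)) :
    ∫ s in t (j : ℕ)..t ((j : ℕ) + 1), (xalg N m k n p t c j κ s) ^ 2 =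
      ∑ i, ((t ((j : ℕ) + 1) - t (j : ℕ)) ^ ((1:ℝ)/2) * Real.sqrt (γ i) *
        (auxR N p fun l => c (j, Sum.inr (κ, l))).eval (σ i)) ^ 2 := by
  have hj := hmono j j.2
  have hR := auxR_deg N p hdeg fun l => c (j, Sum.inr (κ, l))
  simp only [aux_xalg, ← eval_pow]
  rw [aux_quad hq (natDegree_pow_le.trans (by omega)) _ _ hj, Finset.mul_sum]
  refine Finset.sum_congr rfl fun i _ => ?_
  rw [aux_sq1 (sub_pos.mpr hj) (hq.2.2.1 i), eval_pow]

lemma aux_diff (hN : 1 ≤ N) (hmono : ∀ j < n, t j < t (j + 1))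
    (hdeg : ∀ i < N, (p i).natDegree ≤ N - 1) (hqb : IsQuad σb γb (2 * N))
    (j : Fin n) (κ : Fin k) :
    ∫ s in t (j : ℕ)..t ((j : ℕ) + 1), (xdiff N m k n p t c j κ s) ^ 2 =
      ∑ i, ((t ((j : ℕ) + 1) - t (j : ℕ)) ^ ((3:ℝ)/2) * Real.sqrt (γb i) *
        (auxQ N p fun l => c (j, Sum.inl (κ, l))).eval (σb i)) ^ 2 := by
  have hj := hmono j j.2
  have hR := auxQ_deg N hN p hdeg fun l => c (j, Sum.inl (κ, l))
  have := aux_quad hqb (q := (C (t ((j : ℕ) + 1) - t (j : ℕ)) *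
    (auxQ N p fun l => c (j, Sum.inl (κ, l)))) ^ 2)
    (natDegree_pow_le.trans (Nat.mul_le_mul_left 2 ((natDegree_C_mul_le _ _).trans hR))) _ _ hj
  simp only [eval_pow, eval_mul, eval_C] at this
  simp only [aux_xdiff]
  rw [this, Finset.mul_sum]
  refine Finset.sum_congr rfl fun i _ => ?_
  rw [aux_sq3 (sub_pos.mpr hj) (hqb.2.2.1 i)]

lemma aux_diff' (hN : 1 ≤ N) (hmono : ∀ j < n, t j < t (j + 1))
    (hdeg : ∀ i < N, (p i).natDegree ≤ N - 1) (hqb : IsQuad σb γb (2 * N))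
    (j : Fin n) (κ : Fin k) :
    ∫ s in t (j : ℕ)..t ((j : ℕ) + 1), ((xdiff N m k n p t c j κ s) ^ 2 +
        (deriv (xdiff N m k n p t c j κ) s) ^ 2) =
      ∑ i, ((t ((j : ℕ) + 1) - t (j : ℕ)) ^ ((3:ℝ)/2) * Real.sqrt (γb i) *
        (auxQ N p fun l => c (j, Sum.inl (κ, l))).eval (σb i)) ^ 2 +
      ∑ i, ((t ((j : ℕ) + 1) - t (j : ℕ)) ^ ((1:ℝ)/2) * Real.sqrt (γb i) *
        (derivative (auxQ N p fun l => c (j, Sum.inl (κ, l)))).eval (σb i)) ^ 2 := by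
  have hj := hmono j j.2
  have hR := auxQ_deg N hN p hdeg fun l => c (j, Sum.inl (κ, l))
  have hD := (natDegree_derivative_le (auxQ N p fun l => c (j, Sum.inl (κ, l)))).trans
    ((Nat.sub_le _ _).trans hR)
  have := aux_quad hqb (q := (C (t ((j : ℕ) + 1) - t (j : ℕ)) *
    (auxQ N p fun l => c (j, Sum.inl (κ, l)))) ^ 2 +
      (derivative (auxQ N p fun l => c (j, Sum.inl (κ, l)))) ^ 2)
    (natDegree_add_le_of_degree_le
      (natDegree_pow_le.trans (Nat.mul_le_mul_left 2 ((natDegree_C_mul_le _ _).trans hR)))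
      (natDegree_pow_le.trans (Nat.mul_le_mul_left 2 hD))) _ _ hj
  simp only [eval_pow, eval_mul, eval_C, eval_add] at this
  simp only [aux_dxdiff N m k n p t c j κ hj]
  simp only [aux_xdiff]
  rw [this, Finset.mul_sum, ← Finset.sum_add_distrib]
  refine Finset.sum_congr rfl fun i _ => ?_
  rw [aux_sq3 (sub_pos.mpr hj) (hqb.2.2.1 i), aux_sq1 (sub_pos.mpr hj) (hqb.2.2.1 i)]
  ring

lemma aux_L2 (hN : 1 ≤ N) (hmono : ∀ j < n, t j < t (j + 1))
    (hdeg : ∀ i < N, (p i).natDegree ≤ N - 1) (hq : IsQuad σ γ (2 * N - 2))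
    (hqb : IsQuad σb γb (2 * N)) :
    normL2sq N m k n p t c = ∑ i, ((Umat N m k n p
      (fun j => t ((j : ℕ) + 1) - t (j : ℕ)) σ γ σb γb).mulVec c i) ^ 2 := by
  simp only [normL2sq, Fintype.sum_prod_type, Fintype.sum_sum_type, U_inl, U_inr]
  refine Finset.sum_congr rfl fun j _ => ?_
  congr 1
  · exact Finset.sum_congr rfl fun κ _ => aux_diff N m k n t p σb γb c hN hmono hdeg hqb j κ
  · exact Finset.sum_congr rfl fun κ _ => aux_alg N m k n t p σ γ c hmono hdeg hq j κ

lemma aux_H1 (hN : 1 ≤ N) (hmono : ∀ j < n, t j < t (j + 1))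
    (hdeg : ∀ i < N, (p i).natDegree ≤ N - 1) (hq : IsQuad σ γ (2 * N - 2))
    (hqb : IsQuad σb γb (2 * N)) :
    normH1sq N m k n p t c = ∑ i, ((Uhmat N m k n p
      (fun j => t ((j : ℕ) + 1) - t (j : ℕ)) σ γ σb γb).mulVec c i) ^ 2 := by
  simp only [normH1sq, Fintype.sum_prod_type, Fintype.sum_sum_type, Uh_inl, Uh_inr, Uh_inm]
  refine Finset.sum_congr rfl fun j _ => ?_
  congr 1
  · exact Finset.sum_congr rfl fun κ _ => aux_diff' N m k n t p σb γb c hN hmono hdeg hqb j κ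
  · exact Finset.sum_congr rfl fun κ _ => aux_alg N m k n t p σ γ c hmono hdeg hq j κ

lemma aux_injU (hN : 1 ≤ N) (hmono : ∀ j < n, t j < t (j + 1))
    (hdeg : ∀ i < N, (p i).natDegree ≤ N - 1)
    (hli : LinearIndependent ℝ fun i : Fin N => p i) (hq : IsQuad σ γ (2 * N - 2))
    (hqb : IsQuad σb γb (2 * N))
    (h : (Umat N m k n p (fun j => t ((j : ℕ) + 1) - t (j : ℕ)) σ γ σb γb).mulVec c = 0) :
    c = 0 := by
  funext ⟨j, x⟩
  have hj := sub_pos.mpr (hmono j j.2)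
  rcases x with ⟨κ, l⟩ | ⟨κ, l⟩
  · refine congrFun (auxQ_inj N p hli (fun l => c (j, Sum.inl (κ, l))) ?_) l
    refine aux_nodes hqb (Nat.lt_succ_of_le (auxQ_deg N hN p hdeg _)) fun i => ?_
    have h1 := congrFun h (j, Sum.inl (κ, i))
    rw [U_inl] at h1
    have h2 := Real.rpow_pos_of_pos hj ((3:ℝ)/2)
    have h3 := Real.sqrt_pos.mpr (hqb.2.2.1 i)
    exact (mul_eq_zero.mp h1).resolve_left (mul_pos h2 h3).ne'
  · refine congrFun (auxR_inj N p hli (fun l => c (j, Sum.inr (κ, l))) ?_) l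
    refine aux_nodes hq (lt_of_le_of_lt (auxR_deg N p hdeg _) (by omega)) fun i => ?_
    have h1 := congrFun h (j, Sum.inr (κ, i))
    rw [U_inr] at h1
    have h2 := Real.rpow_pos_of_pos hj ((1:ℝ)/2)
    have h3 := Real.sqrt_pos.mpr (hq.2.2.1 i)
    exact (mul_eq_zero.mp h1).resolve_left (mul_pos h2 h3).ne'

lemma aux_injUh (hN : 1 ≤ N) (hmono : ∀ j < n, t j < t (j + 1))
    (hdeg : ∀ i < N, (p i).natDegree ≤ N - 1)
    (hli : LinearIndependent ℝ fun i : Fin N => p i) (hq : IsQuad σ γ (2 * N - 2))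
    (hqb : IsQuad σb γb (2 * N))
    (h : (Uhmat N m k n p (fun j => t ((j : ℕ) + 1) - t (j : ℕ)) σ γ σb γb).mulVec c = 0) :
    c = 0 := by
  refine aux_injU N m k n t p σ γ σb γb c hN hmono hdeg hli hq hqb ?_
  funext ⟨j, x⟩
  rcases x with ⟨κ, l⟩ | ⟨κ, l⟩
  · rw [U_inl]
    exact (Uh_inl N m k n p _ σ γ σb γb c j κ l).symm.trans (congrFun h _)
  · rw [U_inr]
    exact (Uh_inr N m k n p _ σ γ σb γb c j κ l).symm.trans (congrFun h _)

end

theorem stmt4 (N m k n : ℕ) (hN : 1 ≤ N) (hk : 1 ≤ k) (hkm : k < m) (hn : 1 ≤ n)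
    (t : ℕ → ℝ) (hmono : ∀ j < n, t j < t (j + 1))
    (p : ℕ → Polynomial ℝ)
    (hdeg : ∀ i < N, (p i).natDegree ≤ N - 1)
    (hli : LinearIndependent ℝ fun i : Fin N => p i)
    (σ γ : Fin N → ℝ) (σb γb : Fin (N + 1) → ℝ)
    (hq : IsQuad σ γ (2 * N - 2)) (hqb : IsQuad σb γb (2 * N))
    (smaxU sminU smaxUh sminUh : ℝ)
    (hsmaxU : IsGreatest
      {s | IsSingVal (Umat N m k n p (fun j => t ((j : ℕ) + 1) - t (j : ℕ)) σ γ σb γb) s} smaxU)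
    (hsminU : IsLeast
      {s | IsSingVal (Umat N m k n p (fun j => t ((j : ℕ) + 1) - t (j : ℕ)) σ γ σb γb) s} sminU)
    (hsmaxUh : IsGreatest
      {s | IsSingVal (Uhmat N m k n p (fun j => t ((j : ℕ) + 1) - t (j : ℕ)) σ γ σb γb) s} smaxUh)
    (hsminUh : IsLeast
      {s | IsSingVal (Uhmat N m k n p (fun j => t ((j : ℕ) + 1) - t (j : ℕ)) σ γ σb γb) s} sminUh) :
    sSup {r : ℝ | ∃ c : UIdx N m k n → ℝ, c ≠ 0 ∧
        r = Real.sqrt (normL2sq N m k n p t c) / enormU c} = smaxU ∧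
    sSup {r : ℝ | ∃ c : UIdx N m k n → ℝ, c ≠ 0 ∧
        r = enormU c / Real.sqrt (normL2sq N m k n p t c)} = sminU⁻¹ ∧
    sSup {r : ℝ | ∃ c : UIdx N m k n → ℝ, c ≠ 0 ∧
        r = Real.sqrt (normH1sq N m k n p t c) / enormU c} = smaxUh ∧
    sSup {r : ℝ | ∃ c : UIdx N m k n → ℝ, c ≠ 0 ∧
        r = enormU c / Real.sqrt (normH1sq N m k n p t c)} = sminUh⁻¹ := by
  simp only [aux_L2 N m k n t p σ γ σb γb _ hN hmono hdeg hq hqb,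
    aux_H1 N m k n t p σ γ σb γb _ hN hmono hdeg hq hqb, enormU]
  exact ⟨aux_supmax _ hsmaxU,
    aux_supmin _ (fun c => aux_injU N m k n t p σ γ σb γb c hN hmono hdeg hli hq hqb) hsminU,
    aux_supmax _ hsmaxUh,
    aux_supmin _ (fun c => aux_injUh N m k n t p σ γ σb γb c hN hmono hdeg hli hq hqb) hsminUh⟩
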